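/- Let K be a finite abstract simplicial complex with more than one vertex. If no vertex of K is dominated by another vertex, then scat(K) ≥ 1, i.e., K itself is not a categorical subcomplex of K. -/

import Mathlib

/-- A finite abstract simplicial complex on a (finite) vertex type `V`:
a collection of nonempty finite subsets closed under taking nonempty subsets. -/
structure SComplex (V : Type*) where
  faces : Set (Finset V)
  nonempty_of_mem : ∀ σ ∈ faces, σ.Nonempty
  down_closed : ∀ σ ∈ faces, ∀ τ, τ ⊆ σ → τ.Nonempty → τ ∈ faces

namespace SComplex

variable {V : Type*} [DecidableEq V] [Fintype V]

/-- The vertices of a simplicial complex. -/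
def vertices (K : SComplex V) : Set V := {v | ({v} : Finset V) ∈ K.faces}

/-- A facet: a simplex not properly contained in any other simplex. -/
def IsMaximalFace (K : SComplex V) (σ : Finset V) : Prop :=
  σ ∈ K.faces ∧ ∀ τ ∈ K.faces, σ ⊆ τ → σ = τ

/-- The vertex `v` is dominated by the vertex `v' ≠ v`: every maximal simplex
containing `v` also contains `v'`. -/
def IsDominated (K : SComplex V) (v v' : V) : Prop :=
  v' ≠ v ∧ ({v} : Finset V) ∈ K.faces ∧ ({v'} : Finset V) ∈ K.faces ∧
    ∀ σ, K.IsMaximalFace σ → v ∈ σ → v' ∈ σ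

/-- An elementary strong collapse: removal of the open star of a dominated vertex. -/
def ElemStrongCollapse (K L : SComplex V) : Prop :=
  ∃ v v', K.IsDominated v v' ∧ L.faces = {σ ∈ K.faces | v ∉ σ}

/-- A strong collapse: a finite sequence of elementary strong collapses. -/
def StrongCollapsesTo (K L : SComplex V) : Prop :=
  Relation.ReflTransGen ElemStrongCollapse K L

/-- A vertex map `φ : V → V` is a simplicial map from `K` to `L`. -/
def IsSimplicialMap (K L : SComplex V) (φ : V → V) : Prop :=
  ∀ σ ∈ K.faces, σ.image φ ∈ L.faces

/-- Two simplicial maps `φ ψ : K → L` are contiguous: for each simplex `σ` of `K`,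
`φ(σ) ∪ ψ(σ)` is a simplex of `L`. -/
def Contiguous (K L : SComplex V) (φ ψ : V → V) : Prop :=
  IsSimplicialMap K L φ ∧ IsSimplicialMap K L ψ ∧
    ∀ σ ∈ K.faces, σ.image φ ∪ σ.image ψ ∈ L.faces

/-- `φ` and `ψ` lie in the same contiguity class: they are joined by a finite
chain of pairwise contiguous simplicial maps. -/
def SameContiguityClass (K L : SComplex V) (φ ψ : V → V) : Prop :=
  Relation.ReflTransGen (Contiguous K L) φ ψ

/-- A subcomplex `U ⊆ K` is categorical in `K`: there is a vertex `v` of `K` such that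
the inclusion `U → K` and the constant map `c_v : U → K` lie in the same contiguity class. -/
def IsCategoricalIn (U K : SComplex V) : Prop :=
  U.faces ⊆ K.faces ∧ ∃ v, ({v} : Finset V) ∈ K.faces ∧
    SameContiguityClass U K id (fun _ => v)

/-- The (non-normalized) simplicial Lusternik–Schnirelmann category of `K`:
the least `m` such that `K` can be covered by `m + 1` categorical subcomplexes. -/
noncomputable def scat (K : SComplex V) : ℕ :=
  sInf {m : ℕ | ∃ U : Fin (m + 1) → SComplex V,
    (∀ i, (U i).IsCategoricalIn K) ∧ ∀ σ ∈ K.faces, ∃ i, σ ∈ (U i).faces}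

/-- A discrete Morse function on `K` in the sense of Forman. -/
def IsDiscreteMorse (K : SComplex V) (f : Finset V → ℝ) : Prop :=
  ∀ σ ∈ K.faces,
    {τ | τ ∈ K.faces ∧ σ ⊂ τ ∧ τ.card = σ.card + 1 ∧ f τ ≤ f σ}.Subsingleton ∧
    {υ | υ ∈ K.faces ∧ υ ⊂ σ ∧ υ.card + 1 = σ.card ∧ f σ ≤ f υ}.Subsingleton

/-- A critical simplex of `f` (in the sense of Forman). -/
def IsCriticalSimplex (K : SComplex V) (f : Finset V → ℝ) (σ : Finset V) : Prop :=
  σ ∈ K.faces ∧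
    {τ | τ ∈ K.faces ∧ σ ⊂ τ ∧ τ.card = σ.card + 1 ∧ f τ ≤ f σ} = ∅ ∧
    {υ | υ ∈ K.faces ∧ υ ⊂ σ ∧ υ.card + 1 = σ.card ∧ f σ ≤ f υ} = ∅

/-- The induced gradient vector field
`V_f = {(σ⁽ᵖ⁾, τ⁽ᵖ⁺¹⁾) : σ < τ, f σ ≥ f τ}`. -/
def gradientVectorField (K : SComplex V) (f : Finset V → ℝ) : Set (Finset V × Finset V) :=
  {p | p.1 ∈ K.faces ∧ p.2 ∈ K.faces ∧ p.1 ⊂ p.2 ∧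
    p.2.card = p.1.card + 1 ∧ f p.2 ≤ f p.1}

/-- The level subcomplex `K(c)`: all simplices `τ` with `f τ ≤ c` together with
all of their faces. -/
def levelSubcomplex (K : SComplex V) (f : Finset V → ℝ) (c : ℝ) : SComplex V where
  faces := {σ | σ ∈ K.faces ∧ ∃ τ ∈ K.faces, σ ⊆ τ ∧ f τ ≤ c}
  nonempty_of_mem σ hσ := K.nonempty_of_mem σ hσ.1
  down_closed σ hσ τ hτσ hτ :=
    ⟨K.down_closed σ hσ.1 τ hτσ hτ,
      let ⟨ρ, hρK, hσρ, hρc⟩ := hσ.2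
      ⟨ρ, hρK, hτσ.trans hσρ, hρc⟩⟩

/-- `St(v,u) = st°(v) ∩ st(u)`: the simplices of the open star of `v`
that lie in the star of `u`. -/
def St (K : SComplex V) (v u : V) : Set (Finset V) :=
  {σ | σ ∈ K.faces ∧ v ∈ σ ∧ insert u σ ∈ K.faces}

/-- `m_v = min {f τ : f τ > f(uv), τ ∈ (K − St(v,u)) ∪ (Crit(f) ∩ St(v,u))}`. -/
noncomputable def mVal (K : SComplex V) (f : Finset V → ℝ) (v u : V) : ℝ :=
  sInf {y | ∃ τ ∈ K.faces, f τ = y ∧ f ({u, v} : Finset V) < y ∧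
    (τ ∉ K.St v u ∨ IsCriticalSimplex K f τ)}

/-- A regular value of `f`: an output value of `f` that is not a critical value. -/
def IsRegularValue (K : SComplex V) (f : Finset V → ℝ) (c : ℝ) : Prop :=
  (∃ σ ∈ K.faces, f σ = c) ∧ ∀ σ, IsCriticalSimplex K f σ → f σ ≠ c

/-- The candidates for `l_v`: regular values `c ∈ f(St(v,u))` with
`f(uv) ≤ c ≤ m_v` such that every maximal regular simplex of
`K(c) ∩ St(v,u)` contains the vertex `u`. -/
def lCandidates (K : SComplex V) (f : Finset V → ℝ) (v u : V) : Set ℝ :=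
  {c | (∃ σ ∈ K.St v u, f σ = c) ∧ IsRegularValue K f c ∧
    f ({u, v} : Finset V) ≤ c ∧ c ≤ mVal K f v u ∧
    ∀ σ ∈ (levelSubcomplex K f c).faces ∩ K.St v u,
      ¬ IsCriticalSimplex K f σ →
      (∀ τ ∈ (levelSubcomplex K f c).faces ∩ K.St v u,
        ¬ IsCriticalSimplex K f τ → σ ⊆ τ → σ = τ) → u ∈ σ}

/-- `l_v`: the largest element of `lCandidates`. -/
noncomputable def lVal (K : SComplex V) (f : Finset V → ℝ) (v u : V) : ℝ :=
  sSup (lCandidates K f v u)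

/-- The strong collapse of `v` under `f`:
`S^f_v = {(σ,τ) ∈ V_f : f(uv) ≤ f τ ≤ l_v}`. -/
def strongCollapseOf (K : SComplex V) (f : Finset V → ℝ) (v u : V) :
    Set (Finset V × Finset V) :=
  {p | p ∈ gradientVectorField K f ∧
    f ({u, v} : Finset V) ≤ f p.2 ∧ f p.2 ≤ lVal K f v u}

/-- The critical pairs of `f`: the elements of `V_f − ⋃ S^f_v`, the union being taken
over all vertex/edge pairs `(v, uv) ∈ V_f`. -/
def criticalPairs (K : SComplex V) (f : Finset V → ℝ) : Set (Finset V × Finset V) :=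
  gradientVectorField K f \
    ⋃ (v : V) (u : V)
      (_ : (({v} : Finset V), ({u, v} : Finset V)) ∈ gradientVectorField K f),
      strongCollapseOf K f v u

/-- The set of critical objects of `f`: critical simplices together with critical pairs. -/
def scrit (K : SComplex V) (f : Finset V → ℝ) :
    Set (Finset V ⊕ Finset V × Finset V) :=
  (Sum.inl '' {σ | IsCriticalSimplex K f σ}) ∪ (Sum.inr '' criticalPairs K f)

/-- The strong critical values of `f`: the values of `f` on critical objects. -/
def strongCriticalValues (K : SComplex V) (f : Finset V → ℝ) : Set ℝ :=
  {c | (∃ σ, IsCriticalSimplex K f σ ∧ f σ = c) ∨ ∃ p ∈ criticalPairs K f, f p.2 = c}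

/-- The critical objects of `f` whose underlying simplices lie in the subcomplex `L`. -/
def scritIn (K : SComplex V) (f : Finset V → ℝ) (L : SComplex V) :
    Set (Finset V ⊕ Finset V × Finset V) :=
  {o ∈ scrit K f | Sum.elim (· ∈ L.faces)
    (fun p => p.1 ∈ L.faces ∧ p.2 ∈ L.faces) o}

end SComplex

/-!
If `ψ` is contiguous to the identity of `K` and moves a vertex `v`, then `ψ v` dominates `v`: a
maximal simplex `σ ∋ v` must absorb the simplex `σ ∪ ψ(σ)`. Hence without dominated vertices the
contiguity class of the identity contains only maps fixing all vertices, and no constant map does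
that once there are two vertices. Closed stars are categorical, so a nonempty finite complex has a
cover as in the definition of `scat`, and `scat K = 0` then means that `K` is categorical in itself.
-/

namespace SComplex

section Vertices

variable {V : Type*} {K : SComplex V} {σ : Finset V} {v : V}

theorem mem_vertices_of_mem (hσ : σ ∈ K.faces) (hv : v ∈ σ) : v ∈ K.vertices :=
  K.down_closed σ hσ {v} (Finset.singleton_subset_iff.2 hv) (Finset.singleton_nonempty v)

theorem image_eq_of_eqOn_vertices {W : Type*} [DecidableEq W] {φ φ' : V → W}
    (h : Set.EqOn φ φ' K.vertices) (hσ : σ ∈ K.faces) : σ.image φ = σ.image φ' :=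
  Finset.image_congr fun _ hw => h (mem_vertices_of_mem hσ hw)

end Vertices

variable {V : Type*} [DecidableEq V] {K L U : SComplex V} {σ : Finset V} {φ φ' ψ : V → V} {v : V}

theorem Contiguous.congr_left (h : Contiguous K L φ ψ) (hφ : Set.EqOn φ φ' K.vertices) :
    Contiguous K L φ' ψ :=
  ⟨fun _ hσ => image_eq_of_eqOn_vertices hφ hσ ▸ h.1 _ hσ, h.2.1,
    fun _ hσ => image_eq_of_eqOn_vertices hφ hσ ▸ h.2.2 _ hσ⟩

theorem Contiguous.isDominated_of_ne (h : Contiguous K K id ψ) (hv : v ∈ K.vertices)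
    (hne : ψ v ≠ v) : K.IsDominated v (ψ v) := by
  refine ⟨hne, hv, by simpa using h.2.1 {v} hv, fun σ hσ hvσ => ?_⟩
  have hunion : σ ∪ σ.image ψ ∈ K.faces := by simpa using h.2.2 σ hσ.1
  have habsorb : σ = σ ∪ σ.image ψ := hσ.2 _ hunion Finset.subset_union_left
  rw [habsorb]
  exact Finset.mem_union_right _ (Finset.mem_image_of_mem ψ hvσ)

theorem SameContiguityClass.eqOn_id (hd : ∀ v v' : V, ¬ K.IsDominated v v')
    (h : SameContiguityClass K K id ψ) : Set.EqOn ψ id K.vertices := by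
  induction h with
  | refl => exact Set.eqOn_refl id _
  | tail _ hstep ih =>
    intro v hv
    by_contra hne
    exact hd v _ ((hstep.congr_left ih).isDominated_of_ne hv hne)

theorem not_isCategoricalIn_self (hK : K.vertices.Nontrivial)
    (hd : ∀ v v' : V, ¬ K.IsDominated v v') : ¬ K.IsCategoricalIn K := by
  rintro ⟨-, v, -, hconst⟩
  obtain ⟨a, ha, b, hb, hab⟩ := hK
  have hfix := hconst.eqOn_id hd
  exact hab ((hfix ha).symm.trans (hfix hb))

theorem Contiguous.mono_left (h : Contiguous L K φ ψ) (hUL : U.faces ⊆ L.faces) :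
    Contiguous U K φ ψ :=
  ⟨fun σ hσ => h.1 σ (hUL hσ), fun σ hσ => h.2.1 σ (hUL hσ), fun σ hσ => h.2.2 σ (hUL hσ)⟩

theorem IsCategoricalIn.mono (h : L.IsCategoricalIn K) (hUL : U.faces ⊆ L.faces) :
    U.IsCategoricalIn K := by
  obtain ⟨hLK, v, hv, hconst⟩ := h
  exact ⟨hUL.trans hLK, v, hv,
    Relation.ReflTransGen.mono (fun _ _ hstep => hstep.mono_left hUL) _ _ hconst⟩

/-- The closed star of `v` in `K`: the simplices that span a simplex of `K` together with `v`.
It is a cone with apex `v`, which makes it a categorical subcomplex; it has no simplices when `v`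
is not a vertex of `K`. -/
def closedStar (K : SComplex V) (v : V) : SComplex V where
  faces := {σ | σ ∈ K.faces ∧ insert v σ ∈ K.faces}
  nonempty_of_mem σ hσ := K.nonempty_of_mem σ hσ.1
  down_closed σ hσ τ hτσ hτ :=
    ⟨K.down_closed σ hσ.1 τ hτσ hτ,
      K.down_closed _ hσ.2 _ (Finset.insert_subset_insert v hτσ) (Finset.insert_nonempty v τ)⟩

theorem mem_closedStar_of_mem (hσ : σ ∈ K.faces) (hv : v ∈ σ) : σ ∈ (K.closedStar v).faces :=
  ⟨hσ, by rwa [Finset.insert_eq_of_mem hv]⟩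

theorem isCategoricalIn_closedStar (hv : v ∈ K.vertices) :
    (K.closedStar v).IsCategoricalIn K := by
  have himage : ∀ σ ∈ (K.closedStar v).faces, σ.image (fun _ => v) = {v} := fun σ hσ =>
    Finset.image_const (K.nonempty_of_mem σ hσ.1) v
  refine ⟨fun σ hσ => hσ.1, v, hv, .single ⟨fun σ hσ => ?_, fun σ hσ => ?_, fun σ hσ => ?_⟩⟩
  · rw [Finset.image_id]
    exact hσ.1
  · rw [himage σ hσ]
    exact hv
  · rw [himage σ hσ, Finset.image_id, Finset.union_singleton]
    exact hσ.2

theorem exists_categorical_cover (hfin : K.vertices.Finite) (hne : K.vertices.Nonempty) :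
    ∃ (m : ℕ) (U : Fin (m + 1) → SComplex V),
      (∀ i, (U i).IsCategoricalIn K) ∧ ∀ σ ∈ K.faces, ∃ i, σ ∈ (U i).faces := by
  have := hfin.to_subtype
  have := hne.to_subtype
  obtain ⟨m, hm⟩ := Nat.exists_eq_succ_of_ne_zero (Nat.card_pos (α := K.vertices)).ne'
  let e : K.vertices ≃ Fin (m + 1) := Finite.equivFinOfCardEq hm
  refine ⟨m, fun i => K.closedStar (e.symm i),
    fun i => isCategoricalIn_closedStar (e.symm i).2, fun σ hσ => ?_⟩
  obtain ⟨v, hv⟩ := K.nonempty_of_mem σ hσ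
  exact ⟨e ⟨v, mem_vertices_of_mem hσ hv⟩, by simpa using mem_closedStar_of_mem hσ hv⟩

theorem scat_eq_zero_iff (hfin : K.vertices.Finite) (hne : K.vertices.Nonempty) :
    scat K = 0 ↔ K.IsCategoricalIn K := by
  constructor
  · intro h
    -- `sInf ∅ = 0` in `ℕ`, so the absence of a categorical cover has to be excluded.
    obtain ⟨U, hU, hcover⟩ | hempty := Nat.sInf_eq_zero.1 h
    · refine (hU 0).mono fun σ hσ => ?_
      obtain ⟨i, hi⟩ := hcover σ hσ
      rwa [Fin.fin_one_eq_zero i] at hi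
    · obtain ⟨m, hm⟩ := exists_categorical_cover hfin hne
      exact absurd hm (Set.eq_empty_iff_forall_notMem.1 hempty m)
  · intro h
    exact Nat.sInf_eq_zero.2 (.inl ⟨fun _ => K, fun _ => h, fun _ hσ => ⟨0, hσ⟩⟩)

end SComplex

open SComplex in
theorem scat_pos_of_no_dominated_vertex_general {V : Type*} [DecidableEq V]
    (K : SComplex V) (hK : K.vertices.Nontrivial)
    (hd : ∀ v v' : V, ¬ K.IsDominated v v') :
    (K.vertices.Finite → 1 ≤ scat K) ∧ ¬ K.IsCategoricalIn K := by
  have hnot := not_isCategoricalIn_self hK hd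
  refine ⟨fun hfin => Nat.one_le_iff_ne_zero.2 fun hzero => hnot ?_, hnot⟩
  exact (scat_eq_zero_iff hfin hK.nonempty).1 hzero

open SComplex in
/-- If a finite abstract simplicial complex `K` has more than one vertex and no vertex of
`K` is dominated by another vertex, then `scat K ≥ 1`, i.e. `K` itself is not a
categorical subcomplex of `K`. -/
theorem scat_pos_of_no_dominated_vertex {V : Type*} [DecidableEq V] [Fintype V]
    (K : SComplex V) (hK : 1 < K.vertices.ncard)
    (hd : ∀ v v' : V, ¬ K.IsDominated v v') :
    1 ≤ scat K ∧ ¬ K.IsCategoricalIn K := by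
  have h := scat_pos_of_no_dominated_vertex_general K (Set.one_lt_ncard_iff_nontrivial.1 hK) hd
  exact ⟨h.1 K.vertices.toFinite, h.2⟩
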